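/- arXiv:0905.0187 — 2 statements merged into one kernel-verified Lean document; each statement's English description precedes it below -/
import Mathlib

section
/- Let ξ be a state on ℓ^∞ invariant under the unit shift T_1, and let a > 0, b ≥ 0. Define M_k := sup_{t∈[ak−b, ak+b]} f(t) − inf_{t∈[ak−b, ak+b]} f(t) for k ≥ ⌈b/a⌉, and M_k := 0 for smaller k. Then ξ({M_k}_{k≥1}) = 0. -/
open Filter

/-- A bounded real sequence (an element of `ℓ^∞`). -/
def IsBddSeq (a : ℕ → ℝ) : Prop := ∃ C, ∀ k, |a k| ≤ C

/-- A state on `ℓ^∞`: a positive linear functional with `ξ(1) = 1`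
(linearity and positivity are required on bounded sequences). -/
def IsLinfState (ξ : (ℕ → ℝ) → ℝ) : Prop :=
  (∀ a b : ℕ → ℝ, IsBddSeq a → IsBddSeq b → ξ (a + b) = ξ a + ξ b) ∧
  (∀ (c : ℝ) (a : ℕ → ℝ), IsBddSeq a → ξ (c • a) = c * ξ a) ∧
  (∀ a : ℕ → ℝ, IsBddSeq a → (∀ k, 0 ≤ a k) → 0 ≤ ξ a) ∧
  ξ (fun _ => 1) = 1

/-- A generalised limit: a state on `ℓ^∞` with
`liminf a ≤ ξ a ≤ limsup a` for every bounded nonnegative sequence. -/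
def IsGenLim (ξ : (ℕ → ℝ) → ℝ) : Prop :=
  IsLinfState ξ ∧
  ∀ a : ℕ → ℝ, IsBddSeq a → (∀ k, 0 ≤ a k) →
    liminf a atTop ≤ ξ a ∧ ξ a ≤ limsup a atTop

/-- Invariance under the unit shift `T_1`. -/
def ShiftInv (ξ : (ℕ → ℝ) → ℝ) : Prop :=
  ∀ a : ℕ → ℝ, IsBddSeq a → ξ (fun k => a (k + 1)) = ξ a

/-- Invariance under the dilations `D_j`, `D_j(a)_k = a_{⌈k/j⌉}`
(`⌈k/j⌉ = (k + j - 1)/j` in natural division). -/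
def DilInv (ξ : (ℕ → ℝ) → ℝ) : Prop :=
  ∀ j : ℕ, 0 < j → ∀ a : ℕ → ℝ, IsBddSeq a →
    ξ (fun k => a ((k + j - 1) / j)) = ξ a

/-!
Since `t * f t` is nondecreasing and `|f| ≤ C`, the function `f` can only decrease slowly: the map
`t ↦ f t + (C / u) * t` is nondecreasing on `[u, ∞)`. Hence the oscillation of `f` over
`[u, v] ⊆ (0, ∞)` is at most `f v - f u + 2 * C * (v - u) / u`. Enclosing the window
`[a(k + N) - b, a(k + N) + b]` in `[ak, a(k + 2N)]`, where `b ≤ aN`, bounds `M (k + N)` by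
`f (a(k + 2N)) - f (ak)`, whose `ξ`-value vanishes by shift invariance, plus a null sequence,
which every shift-invariant state sends to `0`.
-/

open scoped Topology

section States

variable {ξ : (ℕ → ℝ) → ℝ} {x y : ℕ → ℝ}

namespace IsBddSeq

lemma const (c : ℝ) : IsBddSeq fun _ => c := ⟨|c|, fun _ => le_rfl⟩

lemma add (hx : IsBddSeq x) (hy : IsBddSeq y) : IsBddSeq (x + y) := by
  obtain ⟨C, hC⟩ := hx
  obtain ⟨D, hD⟩ := hy
  exact ⟨C + D, fun k => (abs_add_le _ _).trans (add_le_add (hC k) (hD k))⟩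

lemma smul (c : ℝ) (hx : IsBddSeq x) : IsBddSeq (c • x) := by
  obtain ⟨C, hC⟩ := hx
  refine ⟨|c| * C, fun k => ?_⟩
  rw [Pi.smul_apply, smul_eq_mul, abs_mul]
  exact mul_le_mul_of_nonneg_left (hC k) (abs_nonneg c)

lemma sub (hx : IsBddSeq x) (hy : IsBddSeq y) : IsBddSeq (x - y) := by
  simpa [sub_eq_add_neg] using hx.add (hy.smul (-1))

lemma shift (hx : IsBddSeq x) (n : ℕ) : IsBddSeq fun k => x (k + n) := by
  obtain ⟨C, hC⟩ := hx
  exact ⟨C, fun k => hC (k + n)⟩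

lemma of_tendsto {l : ℝ} (hx : Tendsto x atTop (𝓝 l)) : IsBddSeq x := by
  obtain ⟨C, hC⟩ := (Metric.isBounded_range_of_tendsto x hx).exists_norm_le
  exact ⟨C, fun k => hC (x k) (Set.mem_range_self k)⟩

end IsBddSeq

lemma ShiftInv.map_shift (hT : ShiftInv ξ) (hx : IsBddSeq x) (n : ℕ) :
    ξ (fun k => x (k + n)) = ξ x := by
  induction n with
  | zero => rfl
  | succ n ih => simpa only [add_right_comm, ← add_assoc, ih] using hT _ (hx.shift n)

namespace IsLinfState

lemma map_add (hξ : IsLinfState ξ) (hx : IsBddSeq x) (hy : IsBddSeq y) :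
    ξ (x + y) = ξ x + ξ y :=
  hξ.1 x y hx hy

lemma map_smul (hξ : IsLinfState ξ) (c : ℝ) (hx : IsBddSeq x) : ξ (c • x) = c * ξ x :=
  hξ.2.1 c x hx

lemma map_nonneg (hξ : IsLinfState ξ) (hx : IsBddSeq x) (h0 : ∀ k, 0 ≤ x k) : 0 ≤ ξ x :=
  hξ.2.2.1 x hx h0

lemma map_const (hξ : IsLinfState ξ) (c : ℝ) : ξ (fun _ => c) = c := by
  have h := hξ.map_smul c (.const 1)
  rw [hξ.2.2.2, mul_one] at h
  simpa [Pi.smul_def] using h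

lemma map_sub (hξ : IsLinfState ξ) (hx : IsBddSeq x) (hy : IsBddSeq y) :
    ξ (x - y) = ξ x - ξ y := by
  rw [show x - y = x + (-1 : ℝ) • y by simp [sub_eq_add_neg],
    hξ.map_add hx (hy.smul _), hξ.map_smul _ hy]
  ring

lemma mono (hξ : IsLinfState ξ) (hx : IsBddSeq x) (hy : IsBddSeq y) (h : ∀ k, x k ≤ y k) :
    ξ x ≤ ξ y := by
  have h0 := hξ.map_nonneg (hy.sub hx) fun k => sub_nonneg.2 (h k)
  rwa [hξ.map_sub hy hx, sub_nonneg] at h0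

lemma mono_of_eventually_le (hξ : IsLinfState ξ) (hT : ShiftInv ξ) (hx : IsBddSeq x)
    (hy : IsBddSeq y) (h : ∀ᶠ k in atTop, x k ≤ y k) : ξ x ≤ ξ y := by
  obtain ⟨n, hn⟩ := eventually_atTop.1 h
  rw [← hT.map_shift hx n, ← hT.map_shift hy n]
  exact hξ.mono (hx.shift n) (hy.shift n) fun k => hn (k + n) (Nat.le_add_left n k)

lemma map_eq_of_tendsto (hξ : IsLinfState ξ) (hT : ShiftInv ξ) {l : ℝ}
    (hx : Tendsto x atTop (𝓝 l)) : ξ x = l := by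
  have hbdd := IsBddSeq.of_tendsto hx
  apply le_antisymm
  · refine le_of_forall_gt_imp_ge_of_dense fun c hc => ?_
    rw [← hξ.map_const c]
    exact hξ.mono_of_eventually_le hT hbdd (.const c) (hx.eventually_le_const hc)
  · refine le_of_forall_lt_imp_le_of_dense fun c hc => ?_
    rw [← hξ.map_const c]
    exact hξ.mono_of_eventually_le hT (.const c) hbdd (hx.eventually_const_le hc)

lemma map_eq_zero_of_eventually_le_shift_sub (hξ : IsLinfState ξ) (hT : ShiftInv ξ)
    (hx : IsBddSeq x) (hx0 : ∀ k, 0 ≤ x k) (hy : IsBddSeq y) {e : ℕ → ℝ}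
    (he : Tendsto e atTop (𝓝 0)) {m n : ℕ}
    (h : ∀ᶠ k in atTop, x (k + m) ≤ y (k + n) - y k + e k) : ξ x = 0 := by
  refine le_antisymm ?_ (hξ.map_nonneg hx hx0)
  have he_bdd := IsBddSeq.of_tendsto he
  have hdiff_bdd := (hy.shift n).sub hy
  calc ξ x = ξ (fun k => x (k + m)) := (hT.map_shift hx m).symm
    _ ≤ ξ ((fun k => y (k + n)) - y + e) :=
      hξ.mono_of_eventually_le hT (hx.shift m) (hdiff_bdd.add he_bdd) h
    _ = 0 := by
      rw [hξ.map_add hdiff_bdd he_bdd, hξ.map_sub (hy.shift n) hy, hT.map_shift hy,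
        hξ.map_eq_of_tendsto hT he, sub_self, add_zero]

end IsLinfState

end States

section Oscillation

variable {f : ℝ → ℝ} {C L a b u v : ℝ} {s : Set ℝ}

lemma diam_image_le_of_abs_le (hC : 0 ≤ C) (hf : ∀ t ∈ s, |f t| ≤ C) :
    Metric.diam (f '' s) ≤ 2 * C := by
  refine (Metric.diam_mono ?_ Metric.isBounded_closedBall).trans
    (Metric.diam_closedBall (x := (0 : ℝ)) hC)
  rintro _ ⟨t, ht, rfl⟩
  simpa using hf t ht

lemma isBounded_image_of_abs_le (hf : ∀ t ∈ s, |f t| ≤ C) : Bornology.IsBounded (f '' s) :=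
  isBounded_iff_forall_norm_le.2 ⟨C, Set.forall_mem_image.2 hf⟩

lemma monotoneOn_add_div_mul (hu : 0 < u) (hs : s ⊆ Set.Ici u) (hf : ∀ t ∈ s, |f t| ≤ C)
    (hmono : MonotoneOn (fun t => t * f t) s) : MonotoneOn (fun t => f t + C / u * t) s := by
  intro x hx y hy hxy
  have hux : u ≤ x := hs hx
  have hx0 : 0 < x := hu.trans_le hux
  have hC : 0 ≤ C := (abs_nonneg _).trans (hf x hx)
  have hscaled : x * (f x - f y) ≤ C * (y - x) := by
    calc x * (f x - f y) = x * f x - y * f y + f y * (y - x) := by ring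
      _ ≤ 0 + C * (y - x) :=
        add_le_add (sub_nonpos.2 (hmono hx hy hxy))
          (mul_le_mul_of_nonneg_right (le_of_abs_le (hf y hy)) (sub_nonneg.2 hxy))
      _ = C * (y - x) := zero_add _
  have hdrop : f x - f y ≤ C / u * (y - x) := by
    calc f x - f y ≤ C * (y - x) / x := (le_div_iff₀' hx0).2 hscaled
      _ ≤ C * (y - x) / u :=
        div_le_div_of_nonneg_left (mul_nonneg hC (sub_nonneg.2 hxy)) hu hux
      _ = C / u * (y - x) := by ring
  change f x + C / u * x ≤ f y + C / u * y
  linarith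

lemma diam_image_Icc_le_of_monotoneOn_add_mul (hL : 0 ≤ L) (huv : u ≤ v)
    (hmono : MonotoneOn (fun t => f t + L * t) (Set.Icc u v)) :
    Metric.diam (f '' Set.Icc u v) ≤ f v - f u + 2 * L * (v - u) := by
  have increment_le : ∀ s ∈ Set.Icc u v, ∀ t ∈ Set.Icc u v,
      f t - f s ≤ f v - f u + 2 * L * (v - u) := by
    intro s hs t ht
    have htop : f t + L * t ≤ f v + L * v := hmono ht (Set.right_mem_Icc.2 huv) ht.2
    have hbot : f u + L * u ≤ f s + L * s := hmono (Set.left_mem_Icc.2 huv) hs hs.1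
    have hdist : L * (s - t) ≤ L * (v - u) :=
      mul_le_mul_of_nonneg_left (sub_le_sub hs.2 ht.1) hL
    linarith
  refine Metric.diam_le_of_forall_dist_le_of_nonempty ((Set.nonempty_Icc.2 huv).image f) ?_
  rintro _ ⟨t, ht, rfl⟩ _ ⟨s, hs, rfl⟩
  exact abs_sub_le_iff.2 ⟨increment_le s hs t ht, increment_le t ht s hs⟩

/-- The sequence `M_k` of oscillations of `f` over the windows `[ak - b, ak + b]`, set to `0` while
the window sticks out of `[0, ∞)`. -/
noncomputable def windowOsc (f : ℝ → ℝ) (a b : ℝ) (k : ℕ) : ℝ :=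
  if b / a ≤ (k : ℝ) then
    sSup (f '' Set.Icc (a * k - b) (a * k + b))
      - sInf (f '' Set.Icc (a * k - b) (a * k + b))
  else 0

namespace windowOsc

lemma eq_diam (ha : 0 < a) (hf : ∀ t ≥ 0, |f t| ≤ C) {k : ℕ} (hk : b ≤ a * k) :
    windowOsc f a b k = Metric.diam (f '' Set.Icc (a * k - b) (a * k + b)) := by
  have hbdd := isBounded_image_of_abs_le fun t (ht : t ∈ Set.Icc (a * k - b) (a * k + b)) =>
    hf t ((sub_nonneg.2 hk).trans ht.1)
  rw [windowOsc, if_pos ((div_le_iff₀' ha).2 hk), Real.diam_eq hbdd]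

lemma eq_zero (ha : 0 < a) {k : ℕ} (hk : a * k < b) : windowOsc f a b k = 0 :=
  if_neg (not_le.2 ((lt_div_iff₀' ha).2 hk))

lemma nonneg (ha : 0 < a) (hf : ∀ t ≥ 0, |f t| ≤ C) (k : ℕ) : 0 ≤ windowOsc f a b k := by
  rcases le_or_gt b (a * k) with hk | hk
  · exact (eq_diam ha hf hk).symm ▸ Metric.diam_nonneg
  · exact (eq_zero ha hk).ge

lemma isBddSeq (ha : 0 < a) (hf : ∀ t ≥ 0, |f t| ≤ C) : IsBddSeq (windowOsc f a b) := by
  have hC : 0 ≤ C := (abs_nonneg _).trans (hf 0 le_rfl)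
  refine ⟨2 * C, fun k => ?_⟩
  rw [abs_of_nonneg (nonneg ha hf k)]
  rcases le_or_gt b (a * k) with hk | hk
  · rw [eq_diam ha hf hk]
    exact diam_image_le_of_abs_le hC fun t ht => hf t ((sub_nonneg.2 hk).trans ht.1)
  · rw [eq_zero ha hk]
    positivity

lemma apply_add_le (ha : 0 < a) (hf : ∀ t ≥ 0, |f t| ≤ C)
    (hmono : MonotoneOn (fun t => t * f t) (Set.Ioi 0)) {N k : ℕ} (hN : b ≤ a * N)
    (hk : 0 < k) :
    windowOsc f a b (k + N) ≤
      f (a * (k + 2 * N : ℕ)) - f (a * k) + 4 * C * N / k := by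
  have hC : 0 ≤ C := (abs_nonneg _).trans (hf 0 le_rfl)
  set u : ℝ := a * k with hu_def
  set v : ℝ := a * (k + 2 * N : ℕ) with hv_def
  have hk' : (0 : ℝ) < k := Nat.cast_pos.2 hk
  have hu : 0 < u := mul_pos ha hk'
  have hlen : v - u = 2 * a * N := by rw [hu_def, hv_def]; push_cast; ring
  have huv : u ≤ v := sub_nonneg.1 (hlen ▸ by positivity)
  have hcentre : a * (k + N : ℕ) = u + a * N := by rw [hu_def]; push_cast; ring
  have hwindow : Set.Icc (a * (k + N : ℕ) - b) (a * (k + N : ℕ) + b) ⊆ Set.Icc u v :=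
    Set.Icc_subset_Icc (by linarith) (by linarith)
  have hf' : ∀ t ∈ Set.Icc u v, |f t| ≤ C := fun t ht => hf t (hu.le.trans ht.1)
  have hmono' : MonotoneOn (fun t => f t + C / u * t) (Set.Icc u v) :=
    monotoneOn_add_div_mul hu (fun _ ht => ht.1) hf'
      (hmono.mono fun _ ht => hu.trans_le ht.1)
  calc windowOsc f a b (k + N)
      = Metric.diam (f '' Set.Icc (a * (k + N : ℕ) - b) (a * (k + N : ℕ) + b)) :=
        eq_diam ha hf (by linarith)
    _ ≤ Metric.diam (f '' Set.Icc u v) :=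
        Metric.diam_mono (Set.image_mono hwindow) (isBounded_image_of_abs_le hf')
    _ ≤ f v - f u + 2 * (C / u) * (v - u) :=
        diam_image_Icc_le_of_monotoneOn_add_mul (by positivity) huv hmono'
    _ = f v - f u + 4 * C * N / k := by
        rw [hlen, hu_def]
        field_simp
        ring

end windowOsc

end Oscillation

lemma monotoneOn_mul_of_eq_div {f g : ℝ → ℝ} (hfg : ∀ t > (0 : ℝ), f t = g t / t)
    (hg : MonotoneOn g (Set.Ioi 0)) : MonotoneOn (fun t => t * f t) (Set.Ioi 0) :=
  hg.congr fun t (ht : 0 < t) => by rw [hfg t ht, mul_div_cancel₀ _ ht.ne']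

/-- for a `T_1`-invariant state `ξ` on `ℓ^∞`, and `a > 0`, `b ≥ 0`,
the sequence `M_k := sup_{t∈[ak−b,ak+b]} f(t) − inf_{t∈[ak−b,ak+b]} f(t)` (for
`k ≥ ⌈b/a⌉`, and `0` for smaller `k`) satisfies `ξ(M) = 0`. -/
theorem shiftInv_state_vanishes_on_oscillation
    (ξ : (ℕ → ℝ) → ℝ) (hst : IsLinfState ξ) (hT : ShiftInv ξ)
    (f g : ℝ → ℝ) (hfb : ∃ C, ∀ t ≥ (0 : ℝ), |f t| ≤ C)
    (hfg : ∀ t > (0 : ℝ), f t = g t / t) (hg : MonotoneOn g (Set.Ici 0))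
    (a b : ℝ) (ha : 0 < a) (hb : 0 ≤ b) :
    ξ (fun k => if b / a ≤ (k : ℝ) then
        sSup (f '' Set.Icc (a * k - b) (a * k + b))
          - sInf (f '' Set.Icc (a * k - b) (a * k + b))
      else 0) = 0 := by
  obtain ⟨C, hC⟩ := hfb
  obtain ⟨N, hN⟩ := exists_nat_ge (b / a)
  have hmono := monotoneOn_mul_of_eq_div hfg (hg.mono Set.Ioi_subset_Ici_self)
  have hsample_bdd : IsBddSeq fun k => f (a * k) := ⟨C, fun k => hC _ (by positivity)⟩
  have herr : Tendsto (fun k : ℕ => 4 * C * N / (k : ℝ)) atTop (𝓝 0) :=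
    tendsto_const_div_atTop_nhds_zero_nat _
  change ξ (windowOsc f a b) = 0
  refine hst.map_eq_zero_of_eventually_le_shift_sub hT (windowOsc.isBddSeq ha hC)
    (windowOsc.nonneg ha hC) hsample_bdd herr (m := N) (n := 2 * N) ?_
  filter_upwards [eventually_gt_atTop 0] with k hk
  exact windowOsc.apply_add_le ha hC hmono ((div_le_iff₀' ha).1 hN) hk
end

section
/- Let ξ be a state on ℓ^∞ invariant under the unit shift T_1 (a Banach limit). Define g(t) := (log(1+t))^{−1} ∫_1^t μ_{⌊s⌋} ds for t ≥ 1 and g(t) := 0 for 0 ≤ t < 1. Then: (a) lim_{n→∞} ( sup_{t∈[n,n+1)} g(t) − inf_{t∈[n,n+1)} g(t) ) = 0; and (b) ξ({∫_{n−1}^{n} |g(e^t) − g(⌊e^t⌋)| dt}_{n≥1}) = 0. -/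
open Filter

/-! Put `A(t) = ∫_1^t f` and `L(t) = log (1 + t)`, so that `g = A / L` on `[1, ∞)`, where
`f(s) = μ_⌊s⌋`. For `1 ≤ s ≤ t`,
`L(t) (g(t) - g(s)) = (A(t) - A(s)) - (L(t) - L(s)) g(s)`.
If `|f| ≤ M`, the first term is at most `M (t - s)`. So is the second, since `|A(s)| ≤ M s` and
`s (L(t) - L(s)) ≤ (t - s) L(s)`. Hence `|g(t) - g(s)| ≤ 2 M (t - s) / L(t)`, and therefore
`g(t) - g(⌊t⌋) → 0` as `t → ∞`. This gives (a); substituting `e^t` for `t` and integrating over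
unit intervals, it shows that the sequence in (b) tends to `0`, and a Banach limit extends the
ordinary limit. -/

open MeasureTheory Set Topology

section BanachLimit

variable {ξ : (ℕ → ℝ) → ℝ} {a b : ℕ → ℝ}

lemma isBddSeq_const (c : ℝ) : IsBddSeq fun _ => c := ⟨|c|, fun _ => le_rfl⟩

lemma IsBddSeq.sub_s8 (ha : IsBddSeq a) (hb : IsBddSeq b) : IsBddSeq (a - b) := by
  obtain ⟨C, hC⟩ := ha
  obtain ⟨D, hD⟩ := hb
  exact ⟨C + D, fun k => (abs_sub _ _).trans (add_le_add (hC k) (hD k))⟩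

lemma IsBddSeq.comp (ha : IsBddSeq a) (φ : ℕ → ℕ) : IsBddSeq fun k => a (φ k) :=
  ha.imp fun _ hC k => hC (φ k)

lemma isBddSeq_of_tendsto {l : ℝ} (ha : Tendsto a atTop (𝓝 l)) : IsBddSeq a := by
  obtain ⟨C, hC⟩ := (Metric.isBounded_range_of_tendsto a ha).exists_norm_le
  exact ⟨C, fun k => hC _ (mem_range_self k)⟩

lemma IsLinfState.map_const_s8 (hξ : IsLinfState ξ) (c : ℝ) : ξ (fun _ => c) = c := by
  obtain ⟨-, hsmul, -, hone⟩ := hξ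
  simpa [hone, Pi.smul_def] using hsmul c _ (isBddSeq_const 1)

lemma IsLinfState.mono_s8 (hξ : IsLinfState ξ) (ha : IsBddSeq a) (hb : IsBddSeq b) (hab : a ≤ b) :
    ξ a ≤ ξ b := by
  obtain ⟨hadd, -, hpos, -⟩ := hξ
  have hsub := hadd a (b - a) ha (hb.sub_s8 ha)
  rw [add_sub_cancel] at hsub
  linarith [hpos (b - a) (hb.sub_s8 ha) fun k => sub_nonneg.2 (hab k)]

lemma ShiftInv.map_add_nat (hT : ShiftInv ξ) (ha : IsBddSeq a) (N : ℕ) :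
    ξ (fun k => a (k + N)) = ξ a := by
  induction N with
  | zero => rfl
  | succ N ih =>
    rw [← ih, ← hT _ (ha.comp (· + N))]
    simp only [add_assoc, add_comm 1 N]

theorem ShiftInv.eq_of_tendsto (hT : ShiftInv ξ) (hξ : IsLinfState ξ) {l : ℝ}
    (ha : Tendsto a atTop (𝓝 l)) : ξ a = l := by
  have hbdd := isBddSeq_of_tendsto ha
  refine eq_of_forall_dist_le fun ε hε => ?_
  obtain ⟨N, hN⟩ := Metric.tendsto_atTop.1 ha ε hε
  have htail : ∀ k, |a (k + N) - l| ≤ ε := fun k => (hN (k + N) (Nat.le_add_left N k)).le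
  rw [← hT.map_add_nat hbdd N, Real.dist_eq, abs_sub_le_iff, sub_le_iff_le_add, sub_le_comm]
  constructor
  · rw [← hξ.map_const_s8 (ε + l)]
    exact hξ.mono_s8 (hbdd.comp _) (isBddSeq_const _) fun k => by linarith [abs_le.1 (htail k)]
  · rw [← hξ.map_const_s8 (l - ε)]
    exact hξ.mono_s8 (isBddSeq_const _) (hbdd.comp _) fun k => by linarith [abs_le.1 (htail k)]

end BanachLimit

section Oscillation

variable {X : Type*} [PseudoMetricSpace X]

lemma eventually_image_Ico_subset_closedBall {g : ℝ → X}
    (hg : Tendsto (fun t => dist (g t) (g ⌊t⌋₊)) atTop (𝓝 0)) {ε : ℝ} (hε : 0 < ε) :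
    ∀ᶠ n : ℕ in atTop, g '' Ico (n : ℝ) (n + 1) ⊆ Metric.closedBall (g n) ε := by
  obtain ⟨T, hT⟩ := eventually_atTop.1 (hg.eventually (eventually_le_nhds hε))
  filter_upwards [tendsto_natCast_atTop_atTop.eventually_ge_atTop T] with n hn
  rintro _ ⟨t, ht, rfl⟩
  simpa only [Metric.mem_closedBall, Nat.floor_eq_on_Ico n t ht] using hT t (hn.trans ht.1)

lemma tendsto_diam_image_Ico {g : ℝ → X}
    (hg : Tendsto (fun t => dist (g t) (g ⌊t⌋₊)) atTop (𝓝 0)) :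
    Tendsto (fun n : ℕ => Metric.diam (g '' Ico (n : ℝ) (n + 1))) atTop (𝓝 0) := by
  refine Metric.tendsto_nhds.2 fun ε hε => ?_
  filter_upwards [eventually_image_Ico_subset_closedBall hg (by positivity : 0 < ε / 3)] with n hn
  rw [dist_zero_right, Real.norm_of_nonneg Metric.diam_nonneg]
  linarith [Metric.diam_le_of_subset_closedBall (by positivity) hn]

lemma tendsto_sSup_sub_sInf_image_Ico {g : ℝ → ℝ}
    (hg : Tendsto (fun t => dist (g t) (g ⌊t⌋₊)) atTop (𝓝 0)) :
    Tendsto (fun n : ℕ => sSup (g '' Ico (n : ℝ) (n + 1)) - sInf (g '' Ico (n : ℝ) (n + 1)))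
      atTop (𝓝 0) := by
  refine (tendsto_diam_image_Ico hg).congr' ?_
  filter_upwards [eventually_image_Ico_subset_closedBall hg one_pos] with n hn
  exact Real.diam_eq (Metric.isBounded_closedBall.subset hn)

lemma tendsto_integral_sub_one_self {E : Type*} [NormedAddCommGroup E] [NormedSpace ℝ E]
    {h : ℝ → E} (hh : Tendsto h atTop (𝓝 0)) :
    Tendsto (fun x : ℝ => ∫ t in (x - 1)..x, h t) atTop (𝓝 0) := by
  refine Metric.nhds_basis_closedBall.tendsto_right_iff.2 fun ε hε => ?_
  obtain ⟨T, hT⟩ := eventually_atTop.1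
    (Metric.nhds_basis_closedBall.tendsto_right_iff.1 hh ε hε)
  filter_upwards [eventually_ge_atTop (T + 1)] with x hx
  have hbound : ∀ t ∈ uIoc (x - 1) x, ‖h t‖ ≤ ε := fun t ht => by
    rw [uIoc_of_le (sub_le_self x zero_le_one)] at ht
    simpa using hT t (by linarith [ht.1])
  simpa using intervalIntegral.norm_integral_le_of_norm_le_const hbound

end Oscillation

lemma mul_log_one_add_sub_log_one_add_le {s t : ℝ} (hs : 0 ≤ s) (hst : s ≤ t) :
    s * (Real.log (1 + t) - Real.log (1 + s)) ≤ (t - s) * Real.log (1 + s) := by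
  have hs' : 0 < 1 + s := by positivity
  have ht' : 0 < 1 + t := by linarith
  have hdiff : Real.log (1 + t) - Real.log (1 + s) ≤ (t - s) / (1 + s) :=
    calc Real.log (1 + t) - Real.log (1 + s) = Real.log ((1 + t) / (1 + s)) :=
          (Real.log_div ht'.ne' hs'.ne').symm
      _ ≤ (1 + t) / (1 + s) - 1 := Real.log_le_sub_one_of_pos (div_pos ht' hs')
      _ = (t - s) / (1 + s) := by field_simp; ring
  calc s * (Real.log (1 + t) - Real.log (1 + s)) ≤ s * ((t - s) / (1 + s)) := by gcongr
    _ = (t - s) * (1 - (1 + s)⁻¹) := by field_simp; ring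
    _ ≤ (t - s) * Real.log (1 + s) :=
        mul_le_mul_of_nonneg_left (Real.one_sub_inv_le_log_of_pos hs') (sub_nonneg.2 hst)

section LogMean

variable {E : Type*} [NormedAddCommGroup E] [NormedSpace ℝ E]

/-- The logarithmic mean `(log (1 + t))⁻¹ ∫_1^t f` of `f`, meant for `t ≥ 1`. The function `g` of
the theorem is the logarithmic mean of `s ↦ μ_⌊s⌋`, cut off below `1`. -/
noncomputable def logMean (f : ℝ → E) (t : ℝ) : E :=
  (Real.log (1 + t))⁻¹ • ∫ s in (1 : ℝ)..t, f s

variable {f : ℝ → E} {M s t : ℝ}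

lemma norm_integral_le_mul_sub {a : ℝ} (hM : ∀ t, a ≤ t → ‖f t‖ ≤ M) (hs : a ≤ s)
    (hst : s ≤ t) :
    ‖∫ x in s..t, f x‖ ≤ M * (t - s) := by
  rw [← abs_of_nonneg (sub_nonneg.2 hst)]
  refine intervalIntegral.norm_integral_le_of_norm_le_const fun x hx => hM x ?_
  rw [uIoc_of_le hst] at hx
  exact hs.trans hx.1.le

lemma log_smul_logMean (ht : 0 < t) :
    Real.log (1 + t) • logMean f t = ∫ s in (1 : ℝ)..t, f s :=
  smul_inv_smul₀ (Real.log_pos (by linarith)).ne' _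

lemma log_smul_logMean_sub_logMean (hf : LocallyIntegrableOn f (Ici 1)) (hs : 1 ≤ s)
    (ht : 1 ≤ t) :
    Real.log (1 + t) • (logMean f t - logMean f s) =
      (∫ x in s..t, f x) - (Real.log (1 + t) - Real.log (1 + s)) • logMean f s := by
  have hint : ∀ {u v : ℝ}, 1 ≤ u → 1 ≤ v → IntervalIntegrable f volume u v := fun hu hv =>
    (hf.integrableOn_compact_subset (ordConnected_Ici.uIcc_subset hu hv)
      isCompact_uIcc).intervalIntegrable
  rw [smul_sub, sub_smul, log_smul_logMean (by linarith), log_smul_logMean (by linarith),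
    ← intervalIntegral.integral_add_adjacent_intervals (hint le_rfl hs) (hint hs ht)]
  abel

lemma norm_log_sub_log_smul_logMean_le (hM : ∀ t, 1 ≤ t → ‖f t‖ ≤ M) (hs : 1 ≤ s)
    (hst : s ≤ t) :
    ‖(Real.log (1 + t) - Real.log (1 + s)) • logMean f s‖ ≤ M * (t - s) := by
  have hM0 : 0 ≤ M := (norm_nonneg _).trans (hM 1 le_rfl)
  have hlog : 0 < Real.log (1 + s) := Real.log_pos (by linarith)
  have hdiff : 0 ≤ Real.log (1 + t) - Real.log (1 + s) :=
    sub_nonneg.2 (Real.log_le_log (by linarith) (by linarith))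
  have hint : ‖∫ x in (1 : ℝ)..s, f x‖ ≤ M * s :=
    (norm_integral_le_mul_sub hM le_rfl hs).trans (by gcongr; linarith)
  rw [logMean, norm_smul, norm_smul, norm_inv, Real.norm_of_nonneg hdiff,
    Real.norm_of_nonneg hlog.le]
  calc (Real.log (1 + t) - Real.log (1 + s)) *
        ((Real.log (1 + s))⁻¹ * ‖∫ x in (1 : ℝ)..s, f x‖)
      ≤ (Real.log (1 + t) - Real.log (1 + s)) * ((Real.log (1 + s))⁻¹ * (M * s)) := by gcongr
    _ = M * (s * (Real.log (1 + t) - Real.log (1 + s))) / Real.log (1 + s) := by ring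
    _ ≤ M * ((t - s) * Real.log (1 + s)) / Real.log (1 + s) := by
        gcongr ?_ / _
        exact mul_le_mul_of_nonneg_left
          (mul_log_one_add_sub_log_one_add_le (by linarith) hst) hM0
    _ = M * (t - s) := by field_simp

theorem dist_logMean_logMean_le (hf : LocallyIntegrableOn f (Ici 1))
    (hM : ∀ t, 1 ≤ t → ‖f t‖ ≤ M) (hs : 1 ≤ s) (hst : s ≤ t) :
    dist (logMean f t) (logMean f s) ≤ 2 * M * (t - s) / Real.log (1 + t) := by
  have hlog : 0 < Real.log (1 + t) := Real.log_pos (by linarith)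
  rw [dist_eq_norm, le_div_iff₀' hlog]
  calc Real.log (1 + t) * ‖logMean f t - logMean f s‖
      = ‖Real.log (1 + t) • (logMean f t - logMean f s)‖ := by
        rw [norm_smul, Real.norm_of_nonneg hlog.le]
    _ = ‖(∫ x in s..t, f x) - (Real.log (1 + t) - Real.log (1 + s)) • logMean f s‖ := by
        rw [log_smul_logMean_sub_logMean hf hs (hs.trans hst)]
    _ ≤ M * (t - s) + M * (t - s) := norm_sub_le_of_le (norm_integral_le_mul_sub hM hs hst)
        (norm_log_sub_log_smul_logMean_le hM hs hst)
    _ = 2 * M * (t - s) := by ring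

theorem tendsto_dist_logMean_floor (hf : LocallyIntegrableOn f (Ici 1))
    (hM : ∀ t, 1 ≤ t → ‖f t‖ ≤ M) :
    Tendsto (fun t : ℝ => dist (logMean f t) (logMean f ⌊t⌋₊)) atTop (𝓝 0) := by
  have hM0 : 0 ≤ M := (norm_nonneg _).trans (hM 1 le_rfl)
  have hlim : Tendsto (fun t : ℝ => 2 * M / Real.log (1 + t)) atTop (𝓝 0) :=
    (Real.tendsto_log_atTop.comp (tendsto_atTop_add_const_left _ 1 tendsto_id)).const_div_atTop _
  refine squeeze_zero' (.of_forall fun _ => dist_nonneg) ?_ hlim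
  filter_upwards [eventually_ge_atTop 1] with t ht
  have hfloor : (1 : ℝ) ≤ ⌊t⌋₊ := mod_cast (Nat.one_le_floor_iff t).2 ht
  have hlog : 0 < Real.log (1 + t) := Real.log_pos (by linarith)
  refine (dist_logMean_logMean_le hf hM hfloor (Nat.floor_le (by linarith))).trans ?_
  exact div_le_div_of_nonneg_right
    (mul_le_of_le_one_right (by positivity) (by linarith [Nat.lt_floor_add_one t])) hlog.le

end LogMean

theorem oscillation_of_gamma_vanishes_general {ξ : (ℕ → ℝ) → ℝ} (hξ : IsLinfState ξ)
    (hT : ShiftInv ξ) {f : ℝ → ℝ} {M : ℝ} (hf : LocallyIntegrableOn f (Ici 1))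
    (hM : ∀ t, 1 ≤ t → |f t| ≤ M) {g : ℝ → ℝ} (hg : EqOn g (logMean f) (Ici 1)) :
    Tendsto (fun n : ℕ => sSup (g '' Ico (n : ℝ) (n + 1)) - sInf (g '' Ico (n : ℝ) (n + 1)))
      atTop (𝓝 0) ∧
    ξ (fun n => ∫ t in ((n : ℝ) - 1)..n, |g (Real.exp t) - g ⌊Real.exp t⌋₊|) = 0 := by
  have hfloor : Tendsto (fun t : ℝ => dist (g t) (g ⌊t⌋₊)) atTop (𝓝 0) := by
    refine (tendsto_dist_logMean_floor hf hM).congr' ?_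
    filter_upwards [eventually_ge_atTop 1] with t ht
    rw [hg ht, hg (mod_cast (Nat.one_le_floor_iff t).2 ht : (1 : ℝ) ≤ ⌊t⌋₊)]
  have hexp := tendsto_integral_sub_one_self (hfloor.comp Real.tendsto_exp_atTop)
  exact ⟨tendsto_sSup_sub_sInf_image_Ico hfloor,
    hT.eq_of_tendsto hξ (hexp.comp tendsto_natCast_atTop_atTop)⟩

/-- for a `T_1`-invariant state (Banach limit) `ξ` on `ℓ^∞` and a
nonincreasing nonnegative sequence `(μ_j)_{j≥1}` with
`sup_k (log(1+k))⁻¹ Σ_{j=1}^k μ_j < ∞`, the function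
`g(t) = (log(1+t))⁻¹ ∫_1^t μ_⌊s⌋ ds` (for `t ≥ 1`, `0` for `0 ≤ t < 1`) satisfies:
(a) `sup_{t∈[n,n+1)} g − inf_{t∈[n,n+1)} g → 0` as `n → ∞`; and
(b) `ξ({∫_{n−1}^{n} |g(e^t) − g(⌊e^t⌋)| dt}_n) = 0`. -/
theorem oscillation_of_gamma_vanishes
    (ξ : (ℕ → ℝ) → ℝ) (hst : IsLinfState ξ) (hT : ShiftInv ξ)
    (μ : ℕ → ℝ) (hmono : Antitone μ) (hpos : ∀ j, 0 ≤ μ j)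
    (hsum : ∃ C, ∀ k : ℕ, ∑ j ∈ Finset.Icc 1 k, μ j ≤ C * Real.log (1 + k))
    (g : ℝ → ℝ)
    (hgdef : ∀ t : ℝ, g t =
      if 1 ≤ t then (Real.log (1 + t))⁻¹ * ∫ s in (1 : ℝ)..t, μ ⌊s⌋₊ else 0) :
    Tendsto (fun n : ℕ =>
        sSup (g '' Set.Ico (n : ℝ) ((n : ℝ) + 1)) - sInf (g '' Set.Ico (n : ℝ) ((n : ℝ) + 1)))
      atTop (nhds 0) ∧
    ξ (fun n => ∫ t in ((n : ℝ) - 1)..(n : ℝ),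
        |g (Real.exp t) - g (⌊Real.exp t⌋₊ : ℝ)|) = 0 := by
  have hanti : Antitone fun s : ℝ => μ ⌊s⌋₊ := fun _ _ h => hmono (Nat.floor_mono h)
  exact oscillation_of_gamma_vanishes_general hst hT (hanti.locallyIntegrable.locallyIntegrableOn _)
    (fun t _ => (abs_of_nonneg (hpos _)).trans_le (hmono (Nat.zero_le _)))
    fun t ht => (hgdef t).trans (if_pos ht)
end
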